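/- arXiv:2206.14227 — 3 statements merged into one kernel-verified Lean document; each statement's English description precedes it below -/
import Mathlib

section
/- For all almost-sign-preserving permutations α, β of ℤ, there exists a unique almost-sign-preserving permutation γ such that s_γ(a,b) = min_{ℓ∈ℤ} [s_α(a,ℓ) + s_β(ℓ,b)] for all a,b ∈ ℤ. Writing γ = α ⋆ β, the resulting binary operation ⋆ on ASP is associative, satisfies (α ⋆ β)⁻¹ = β⁻¹ ⋆ α⁻¹, and satisfies χ_{α⋆β} = χ_α + χ_β. -/
/-!
The slipface functions of almost-sign-preserving permutations are characterised axiomatically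
(`Slip χ s`): a function `s : ℤ → ℤ → ℕ` is the slipface function of some `α ∈ ASP` of shift `χ`
if and only if `s` is submodular, satisfies `χ + a - b ≤ s a b`, equals `0` for `a ≪ 0` or `b ≫ 0`,
and equals `χ + a - b` for `a ≫ 0` or `b ≪ 0` (the other variable being fixed).

* `slip_sF`: slipface functions satisfy these axioms. The essential identity is
  `s_α(a,b) - s_{α⁻¹}(b,a) = χ_α + a - b` (`sF_sub_sF_inv`).
* `Slip.exists_perm`: conversely, submodularity and the boundary behaviour force
  `s(a+1,b) - s(a,b) = [b ≤ g a]` and `s(a,b) - s(a,b+1) = [f b < a]`; computing the mixed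
  difference in both ways gives `f b = a ↔ g a = b`, so `f` is the required permutation.
* `Slip.minPlus`: the axioms are stable under `min_ℓ [s(a,ℓ) + t(ℓ,b)]`, the shifts adding up.

Existence follows, uniqueness holds because `s_α` determines `α` (`sF_injective`), associativity
is that of the min-plus product, and the statement on inverses follows from the identity above,
in which the `ℓ`-dependent terms cancel.
-/

/-- A permutation of ℤ is almost-sign-preserving if only finitely many `n` have
exactly one of `n`, `α n` negative. -/
def ASP (α : Equiv.Perm ℤ) : Prop := {n : ℤ | Xor' (n < 0) (α n < 0)}.Finite

/-- The slipface function `s_α(a,b) = #{n ≥ b : α n < a}`. -/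
noncomputable def sF (α : Equiv.Perm ℤ) : ℤ → ℤ → ℕ :=
  fun a b => {n : ℤ | b ≤ n ∧ α n < a}.ncard

/-- The shift `χ_α = s_α(0,0) - s_{α⁻¹}(0,0)`. -/
noncomputable def shiftASP (α : Equiv.Perm ℤ) : ℤ :=
  (sF α 0 0 : ℤ) - (sF α⁻¹ 0 0 : ℤ)

/-- Bruhat order on ASP: pointwise comparison of slipface functions. -/
def BruhatLE (α β : Equiv.Perm ℤ) : Prop := ∀ a b : ℤ, sF α a b ≤ sF β a b

/-- `α ≤_χ β`: Bruhat order together with equality of shifts. -/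
def BruhatLEchi (α β : Equiv.Perm ℤ) : Prop := BruhatLE α β ∧ shiftASP α = shiftASP β

/-- `γ` is the Demazure product `α ⋆ β`:
`s_γ(a,b) = min_{ℓ} [s_α(a,ℓ) + s_β(ℓ,b)]`. -/
def IsDem (α β γ : Equiv.Perm ℤ) : Prop :=
  ∀ a b : ℤ, IsLeast {x : ℕ | ∃ ℓ : ℤ, x = sF α a ℓ + sF β ℓ b} (sF γ a b)

/-- `γ = α ◁ β`: `s_γ(a,b) = max_ℓ [s_α(a,ℓ) - s_{β⁻¹}(b,ℓ)]`. -/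
def IsTriL (α β γ : Equiv.Perm ℤ) : Prop :=
  ∀ a b : ℤ, IsGreatest {x : ℤ | ∃ ℓ : ℤ, x = (sF α a ℓ : ℤ) - (sF β⁻¹ b ℓ : ℤ)}
    ((sF γ a b : ℤ))

/-- `γ = α ▷ β`: `s_γ(a,b) = max_ℓ [s_β(ℓ,b) - s_{α⁻¹}(ℓ,a)]`. -/
def IsTriR (α β γ : Equiv.Perm ℤ) : Prop :=
  ∀ a b : ℤ, IsGreatest {x : ℤ | ∃ ℓ : ℤ, x = (sF β ℓ b : ℤ) - (sF α⁻¹ ℓ a : ℤ)}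
    ((sF γ a b : ℤ))

/-- The set of inversions of a permutation. -/
def InvSet (α : Equiv.Perm ℤ) : Set (ℤ × ℤ) := {p : ℤ × ℤ | p.1 < p.2 ∧ α p.2 < α p.1}

/-! ### Slipface functions of permutations in ASP -/

lemma asp_iff {α : Equiv.Perm ℤ} : ASP α ↔ {n : ℤ | ¬(n < 0 ↔ α n < 0)}.Finite := by
  have : ∀ n, (n < 0 ∧ ¬ α n < 0 ∨ α n < 0 ∧ ¬ n < 0) ↔ ¬(n < 0 ↔ α n < 0) := fun n => by tauto
  simp only [← this]
  rfl

lemma ASP.inv {α : Equiv.Perm ℤ} (h : ASP α) : ASP α⁻¹ := by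
  rw [asp_iff] at *
  refine (h.image α).subset ?_
  intro n hn
  refine ⟨α⁻¹ n, ?_, by simp⟩
  simpa [iff_comm] using hn

lemma ASP.finite {α : Equiv.Perm ℤ} (h : ASP α) (a b : ℤ) :
    {n : ℤ | b ≤ n ∧ α n < a}.Finite := by
  have h2 : (α ⁻¹' Set.Icc 0 a).Finite :=
    (Set.finite_Icc 0 a).preimage α.injective.injOn
  refine (((asp_iff.1 h).union (Set.finite_Icc b 0)).union h2).subset ?_
  rintro n ⟨h1, h3⟩
  simp only [Set.mem_union, Set.mem_ofPred_eq, Set.mem_Icc, Set.mem_preimage]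
  omega

lemma sF_succ_left {α : Equiv.Perm ℤ} (h : ASP α) (a b : ℤ) :
    sF α (a + 1) b = sF α a b + if b ≤ α⁻¹ a then 1 else 0 := by
  unfold sF
  split_ifs with hb
  · have : {n : ℤ | b ≤ n ∧ α n < a + 1} = insert (α⁻¹ a) {n : ℤ | b ≤ n ∧ α n < a} := by
      ext n
      simp only [Set.mem_ofPred_eq, Set.mem_insert_iff, Equiv.Perm.eq_inv_iff_eq, Int.lt_add_one_iff,
        le_iff_lt_or_eq (a := α n)]
      constructor
      · tauto
      · rintro (h1 | h1)
        · rw [← h1] at hb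
          exact ⟨by simpa using hb, Or.inr h1⟩
        · tauto
    rw [this, Set.ncard_insert_of_notMem (by simp) (h.finite a b)]
  · congr 1
    ext n
    simp only [Set.mem_ofPred_eq, Int.lt_add_one_iff, le_iff_lt_or_eq (a := α n)]
    constructor
    · rintro ⟨h1, h2 | h2⟩
      · exact ⟨h1, h2⟩
      · rw [← h2] at hb
        exact absurd h1 (by simpa using hb)
    · tauto

lemma sF_succ_right {α : Equiv.Perm ℤ} (h : ASP α) (a b : ℤ) :
    sF α a b = sF α a (b + 1) + if α b < a then 1 else 0 := by
  unfold sF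
  split_ifs with hb
  · have : {n : ℤ | b ≤ n ∧ α n < a} = insert b {n : ℤ | b + 1 ≤ n ∧ α n < a} := by
      ext n
      simp only [Set.mem_ofPred_eq, Set.mem_insert_iff]
      rcases eq_or_ne n b with rfl | hn
      · simp [hb]
      · simp only [hn, false_or]
        omega
    rw [this, Set.ncard_insert_of_notMem (by simp) (h.finite a (b + 1))]
  · congr 1
    ext n
    simp only [Set.mem_ofPred_eq]
    rcases eq_or_ne n b with rfl | hn
    · simp [hb]
    · omega

/-- Each step `a → a + 1` raises the left-hand side by `1` and each step `b → b + 1` lowers it by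
`1`, because the two slipface functions have complementary increments. -/
lemma sF_sub_sF_inv {α : Equiv.Perm ℤ} (h : ASP α) (a b : ℤ) :
    (sF α a b : ℤ) - sF α⁻¹ b a = shiftASP α + a - b := by
  have ha : ∀ a b : ℤ, (sF α (a + 1) b : ℤ) - sF α⁻¹ b (a + 1) = sF α a b - sF α⁻¹ b a + 1 := by
    intro a b
    have h1 := sF_succ_left h a b
    have h2 := sF_succ_right h.inv b a
    split_ifs at h1 h2 <;> omega
  have hb : ∀ a b : ℤ, (sF α a (b + 1) : ℤ) - sF α⁻¹ (b + 1) a = sF α a b - sF α⁻¹ b a - 1 := by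
    intro a b
    have h1 := sF_succ_right h a b
    have h2 := sF_succ_left h.inv b a
    rw [inv_inv] at h2
    split_ifs at h1 h2 <;> omega
  have hcol : ∀ a : ℤ, (sF α a 0 : ℤ) - sF α⁻¹ 0 a = shiftASP α + a := by
    intro a
    induction a using Int.induction_on with
    | zero => simp [shiftASP]
    | succ i ih => have := ha i 0; omega
    | pred i ih =>
      have := ha (-i - 1) 0
      rw [sub_add_cancel] at this
      omega
  induction b using Int.induction_on with
  | zero => have := hcol a; omega
  | succ i ih => have := hb a i; omega
  | pred i ih =>
    have := hb a (-i - 1)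
    rw [sub_add_cancel] at this
    omega

/-! ### The slipface axioms -/

/-- `Slip χ s`: the axioms characterising slipface functions of permutations in ASP of shift `χ`.
Submodularity is imposed on all rectangles, not only on unit squares. -/
structure Slip (χ : ℤ) (s : ℤ → ℤ → ℕ) : Prop where
  lb : ∀ a b, χ + a - b ≤ s a b
  submod : ∀ a a' b b', a ≤ a' → b ≤ b' → s a b + s a' b' ≤ s a' b + s a b'
  left_bot : ∀ b, ∃ A, ∀ a ≤ A, s a b = 0
  right_top : ∀ a, ∃ B, ∀ b ≥ B, s a b = 0
  left_top : ∀ b, ∃ A, ∀ a ≥ A, (s a b : ℤ) = χ + a - b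
  right_bot : ∀ a, ∃ B, ∀ b ≤ B, (s a b : ℤ) = χ + a - b

lemma sF_right_top {α : Equiv.Perm ℤ} (h : ASP α) (a : ℤ) : ∃ B, ∀ b ≥ B, sF α a b = 0 := by
  obtain ⟨M, hM⟩ := (h.finite a 0).bddAbove
  refine ⟨max 0 (M + 1), fun b hb => ?_⟩
  have : {n : ℤ | b ≤ n ∧ α n < a} = ∅ := by
    ext n
    simp only [Set.mem_ofPred_eq, Set.mem_empty_iff_false, iff_false]
    rintro ⟨h1, h2⟩
    have := hM (show n ∈ {n : ℤ | 0 ≤ n ∧ α n < a} from ⟨by omega, h2⟩)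
    omega
  simp [sF, this]

lemma sF_left_bot {α : Equiv.Perm ℤ} (h : ASP α) (b : ℤ) : ∃ A, ∀ a ≤ A, sF α a b = 0 := by
  obtain ⟨M, hM⟩ := ((h.finite 0 b).image α).bddBelow
  refine ⟨min 0 M, fun a ha => ?_⟩
  have : {n : ℤ | b ≤ n ∧ α n < a} = ∅ := by
    ext n
    simp only [Set.mem_ofPred_eq, Set.mem_empty_iff_false, iff_false]
    rintro ⟨h1, h2⟩
    have := hM (Set.mem_image_of_mem α
      (show n ∈ {n : ℤ | b ≤ n ∧ α n < 0} from ⟨h1, by omega⟩))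
    omega
  simp [sF, this]

lemma slip_sF {α : Equiv.Perm ℤ} (h : ASP α) : Slip (shiftASP α) (sF α) where
  lb a b := by have := sF_sub_sF_inv h a b; omega
  submod a a' b b' ha hb := by
    induction a', ha using Int.leInduction with
    | base => omega
    | succ n hn ih =>
      rw [sF_succ_left h, sF_succ_left h]
      split_ifs <;> omega
  left_bot := sF_left_bot h
  right_top := sF_right_top h
  left_top b := by
    obtain ⟨A, hA⟩ := sF_right_top h.inv b
    exact ⟨A, fun a ha => by have := sF_sub_sF_inv h a b; have := hA a ha; omega⟩
  right_bot a := by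
    obtain ⟨B, hB⟩ := sF_left_bot h.inv a
    exact ⟨B, fun b hb => by have := sF_sub_sF_inv h a b; have := hB b hb; omega⟩

lemma Slip.shift_unique {χ χ' : ℤ} {s : ℤ → ℤ → ℕ} (h : Slip χ s) (h' : Slip χ' s) : χ = χ' := by
  obtain ⟨A, hA⟩ := h.left_top 0
  obtain ⟨A', hA'⟩ := h'.left_top 0
  have := hA (max A A') (le_max_left _ _)
  have := hA' (max A A') (le_max_right _ _)
  omega

/-- The indicator of `α b < a` is `s_α(a,b) - s_α(a,b+1)`, so `s_α` determines `α`. -/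
lemma sF_injective {α β : Equiv.Perm ℤ} (hα : ASP α) (hβ : ASP β)
    (h : ∀ a b, sF α a b = sF β a b) : α = β := by
  have key : ∀ a b, α b < a ↔ β b < a := by
    intro a b
    have h1 := sF_succ_right hα a b
    have h2 := sF_succ_right hβ a b
    rw [h, h] at h1
    split_ifs at h1 h2 <;> omega
  ext b
  have h1 := key (α b + 1) b
  have h2 := key (β b + 1) b
  omega

/-! ### Reconstruction of the permutation from its slipface function -/

/-- An antitone integer sequence going from `1` at `-∞` to `0` at `+∞` is the indicator of a
half-line. -/
lemma exists_threshold (d : ℤ → ℤ) (hd : Antitone d) (h0 : ∃ B, ∀ b ≥ B, d b = 0)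
    (h1 : ∃ B, ∀ b ≤ B, d b = 1) : ∃ g, ∀ b, d b = if b ≤ g then 1 else 0 := by
  obtain ⟨B, hB⟩ := h0
  obtain ⟨C, hC⟩ := h1
  obtain ⟨g, hg, hmax⟩ := Int.exists_greatest_of_bdd (P := fun b => 1 ≤ d b)
    ⟨B, fun z hz => by
      by_contra hlt
      have := hB z (by omega)
      omega⟩ ⟨C, (hC C le_rfl).ge⟩
  refine ⟨g, fun b => ?_⟩
  have hup : d b ≤ 1 := (hd (min_le_left b C)).trans (hC _ (min_le_right b C)).le
  have hlow : 0 ≤ d b := (hB _ (le_max_right b B)).ge.trans (hd (le_max_left b B))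
  split_ifs with hb
  · have := hd hb
    omega
  · have : ¬ 1 ≤ d b := fun h => hb (hmax b h)
    omega

/-- The value `g` plays the role of `α⁻¹ a`. -/
lemma Slip.exists_left {χ : ℤ} {s : ℤ → ℤ → ℕ} (h : Slip χ s) (a : ℤ) :
    ∃ g : ℤ, ∀ b, (s (a + 1) b : ℤ) - s a b = if b ≤ g then 1 else 0 := by
  apply exists_threshold
  · intro b b' hb
    have := h.submod a (a + 1) b b' (by omega) hb
    dsimp only
    omega
  · obtain ⟨B, hB⟩ := h.right_top a
    obtain ⟨B', hB'⟩ := h.right_top (a + 1)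
    refine ⟨max B B', fun b hb => ?_⟩
    rw [hB b (by omega), hB' b (by omega)]
    simp
  · obtain ⟨B, hB⟩ := h.right_bot a
    obtain ⟨B', hB'⟩ := h.right_bot (a + 1)
    refine ⟨min B B', fun b hb => ?_⟩
    rw [hB b (by omega), hB' b (by omega)]
    omega

/-- The value `f` plays the role of `α b`. -/
lemma Slip.exists_right {χ : ℤ} {s : ℤ → ℤ → ℕ} (h : Slip χ s) (b : ℤ) :
    ∃ f : ℤ, ∀ a, (s a b : ℤ) - s a (b + 1) = if f < a then 1 else 0 := by
  -- The difference increases with `a`, so the variable is reflected.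
  obtain ⟨g, hg⟩ := exists_threshold (fun x => (s (-x) b : ℤ) - s (-x) (b + 1))
    (by
      intro x y hxy
      have := h.submod (-y) (-x) b (b + 1) (by omega) (by omega)
      dsimp only
      omega)
    (by
      obtain ⟨A, hA⟩ := h.left_bot b
      obtain ⟨A', hA'⟩ := h.left_bot (b + 1)
      refine ⟨max (-A) (-A'), fun x hx => ?_⟩
      rw [hA (-x) (by omega), hA' (-x) (by omega)]
      simp)
    (by
      obtain ⟨A, hA⟩ := h.left_top b
      obtain ⟨A', hA'⟩ := h.left_top (b + 1)
      refine ⟨min (-A) (-A'), fun x hx => ?_⟩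
      rw [hA (-x) (by omega), hA' (-x) (by omega)]
      omega)
  refine ⟨-g - 1, fun a => ?_⟩
  have := hg (-a)
  simp only [neg_neg] at this
  rw [this]
  split_ifs <;> omega

lemma Slip.exists_perm {χ : ℤ} {s : ℤ → ℤ → ℕ} (h : Slip χ s) :
    ∃ γ : Equiv.Perm ℤ, ASP γ ∧ ∀ a b, sF γ a b = s a b := by
  choose g hg using h.exists_left
  choose f hf using h.exists_right
  -- Both sides say that the mixed difference of `s` at `(a, b)` equals `1`.
  have hfg : ∀ a b, f b = a ↔ g a = b := by
    intro a b
    have h1 := hg a b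
    have h2 := hg a (b + 1)
    have h3 := hf b a
    have h4 := hf b (a + 1)
    split_ifs at h1 h2 h3 h4 <;> omega
  let γ : Equiv.Perm ℤ :=
    ⟨f, g, fun b => (hfg _ _).1 rfl, fun a => (hfg _ _).2 rfl⟩
  have hγf : ∀ b, γ b = f b := fun _ => rfl
  have hγ : ASP γ := by
    obtain ⟨B, hB⟩ := h.right_top 0
    obtain ⟨C, hC⟩ := h.right_bot 0
    rw [asp_iff]
    refine (Set.finite_Icc (min C 0 - 1) (max B 0)).subset ?_
    intro n hn
    simp only [Set.mem_ofPred_eq, hγf] at hn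
    have h1 := hf n 0
    rw [Set.mem_Icc]
    constructor
    · by_contra hlt
      have h2 := hC n (by omega)
      have h3 := hC (n + 1) (by omega)
      split_ifs at h1 <;> omega
    · by_contra hlt
      have h2 := hB n (by omega)
      have h3 := hB (n + 1) (by omega)
      split_ifs at h1 <;> omega
  refine ⟨γ, hγ, fun a b => ?_⟩
  obtain ⟨B, hB⟩ := h.right_top a
  obtain ⟨B', hB'⟩ := sF_right_top hγ a
  rcases le_total (max B B') b with hb | hb
  · rw [hB b (by omega), hB' b (by omega)]
  · induction b, hb using Int.leInductionDown with
    | base => rw [hB _ (le_max_left _ _), hB' _ (le_max_right _ _)]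
    | pred n hn ih =>
      have h1 := hf (n - 1) a
      have h2 := sF_succ_right hγ a (n - 1)
      rw [hγf] at h2
      rw [sub_add_cancel] at h1 h2
      split_ifs at h1 h2 <;> omega

/-! ### The min-plus product and the Demazure product -/

/-- The slipface axioms are stable under the min-plus product `u = min_ℓ [s(·,ℓ) + t(ℓ,·)]`.
For submodularity, the optimal indices of `(a', b)` and `(a, b')` are reused for `(a, b)` and
`(a', b')`, by submodularity of `s` or of `t` according to their order. -/
lemma Slip.minPlus {χ χ' : ℤ} {s t u : ℤ → ℤ → ℕ} (hs : Slip χ s) (ht : Slip χ' t)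
    (hle : ∀ a b ℓ, u a b ≤ s a ℓ + t ℓ b) (hatt : ∀ a b, ∃ ℓ, u a b = s a ℓ + t ℓ b) :
    Slip (χ + χ') u := by
  have hlb : ∀ a b, χ + χ' + a - b ≤ u a b := by
    intro a b
    obtain ⟨ℓ, hℓ⟩ := hatt a b
    have := hs.lb a ℓ
    have := ht.lb ℓ b
    omega
  refine ⟨hlb, ?_, ?_, ?_, ?_, ?_⟩
  · intro a a' b b' ha hb
    obtain ⟨ℓ, hℓ⟩ := hatt a' b
    obtain ⟨m, hm⟩ := hatt a b'
    rcases le_total ℓ m with hlm | hlm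
    · have := hs.submod a a' ℓ m ha hlm
      have := hle a b ℓ
      have := hle a' b' m
      omega
    · have := ht.submod m ℓ b b' hlm hb
      have := hle a b m
      have := hle a' b' ℓ
      omega
  · intro b
    obtain ⟨L, hL⟩ := ht.left_bot b
    obtain ⟨A, hA⟩ := hs.left_bot L
    refine ⟨A, fun a ha => ?_⟩
    have := hle a b L
    have := hL L le_rfl
    have := hA a ha
    omega
  · intro a
    obtain ⟨L, hL⟩ := hs.right_top a
    obtain ⟨B, hB⟩ := ht.right_top L
    refine ⟨B, fun b hb => ?_⟩
    have := hle a b L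
    have := hL L le_rfl
    have := hB b hb
    omega
  · intro b
    obtain ⟨L, hL⟩ := ht.left_top b
    obtain ⟨A, hA⟩ := hs.left_top L
    refine ⟨A, fun a ha => ?_⟩
    have := hle a b L
    have := hL L le_rfl
    have := hA a ha
    have := hlb a b
    omega
  · intro a
    obtain ⟨L, hL⟩ := hs.right_bot a
    obtain ⟨B, hB⟩ := ht.right_bot L
    refine ⟨B, fun b hb => ?_⟩
    have := hle a b L
    have := hL L le_rfl
    have := hB b hb
    have := hlb a b
    omega

lemma IsDem.le {α β γ : Equiv.Perm ℤ} (h : IsDem α β γ) (a b ℓ : ℤ) :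
    sF γ a b ≤ sF α a ℓ + sF β ℓ b := (h a b).2 ⟨ℓ, rfl⟩

lemma IsDem.attained {α β γ : Equiv.Perm ℤ} (h : IsDem α β γ) (a b : ℤ) :
    ∃ ℓ, sF γ a b = sF α a ℓ + sF β ℓ b := (h a b).1

lemma IsDem.unique {α β γ γ' : Equiv.Perm ℤ} (hγ : ASP γ) (hγ' : ASP γ') (h : IsDem α β γ)
    (h' : IsDem α β γ') : γ = γ' :=
  sF_injective hγ hγ' fun a b => (h a b).unique (h' a b)

lemma IsDem.shift {α β γ : Equiv.Perm ℤ} (hα : ASP α) (hβ : ASP β) (hγ : ASP γ)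
    (h : IsDem α β γ) : shiftASP γ = shiftASP α + shiftASP β :=
  (slip_sF hγ).shift_unique ((slip_sF hα).minPlus (slip_sF hβ) h.le h.attained)

lemma exists_isDem {α β : Equiv.Perm ℤ} (hα : ASP α) (hβ : ASP β) :
    ∃ γ, ASP γ ∧ IsDem α β γ := by
  let S : ℤ → ℤ → Set ℕ := fun a b => {x : ℕ | ∃ ℓ : ℤ, x = sF α a ℓ + sF β ℓ b}
  have hS : ∀ a b, IsLeast (S a b) (sInf (S a b)) := fun a b =>
    ⟨Nat.sInf_mem ⟨_, 0, rfl⟩, fun _ hx => Nat.sInf_le hx⟩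
  obtain ⟨γ, hγ, hγS⟩ := ((slip_sF hα).minPlus (slip_sF hβ) (u := fun a b => sInf (S a b))
    (fun a b ℓ => (hS a b).2 ⟨ℓ, rfl⟩) (fun a b => (hS a b).1)).exists_perm
  refine ⟨γ, hγ, fun a b => ?_⟩
  rw [hγS]
  exact hS a b

lemma IsDem.inv {α β γ : Equiv.Perm ℤ} (hα : ASP α) (hβ : ASP β) (hγ : ASP γ)
    (h : IsDem α β γ) : IsDem β⁻¹ α⁻¹ γ⁻¹ := by
  have hχ := h.shift hα hβ hγ
  intro b a
  have h1 := sF_sub_sF_inv hγ a b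
  constructor
  · obtain ⟨ℓ, hℓ⟩ := h.attained a b
    refine ⟨ℓ, ?_⟩
    have h2 := sF_sub_sF_inv hα a ℓ
    have h3 := sF_sub_sF_inv hβ ℓ b
    omega
  · rintro x ⟨ℓ, rfl⟩
    have h2 := sF_sub_sF_inv hα a ℓ
    have h3 := sF_sub_sF_inv hβ ℓ b
    have h4 := h.le a b ℓ
    omega

lemma IsDem.assoc {α β γ δ ε ζ η : Equiv.Perm ℤ} (hζ : ASP ζ) (hη : ASP η)
    (h1 : IsDem α β δ) (h2 : IsDem δ γ ζ) (h3 : IsDem β γ ε) (h4 : IsDem α ε η) : ζ = η := by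
  refine sF_injective hζ hη fun a b => le_antisymm ?_ ?_
  · obtain ⟨ℓ, hℓ⟩ := h4.attained a b
    obtain ⟨m, hm⟩ := h3.attained ℓ b
    have := h2.le a b m
    have := h1.le a m ℓ
    omega
  · obtain ⟨ℓ, hℓ⟩ := h2.attained a b
    obtain ⟨m, hm⟩ := h1.attained a ℓ
    have := h4.le a b m
    have := h3.le m b ℓ
    omega

/-- Theorem A (existence of the Demazure product on ASP): for α,β ∈ ASP there is a
unique γ ∈ ASP with `s_γ(a,b) = min_ℓ [s_α(a,ℓ)+s_β(ℓ,b)]`; the resulting product is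
associative, intertwines inverses, and is additive on shifts. -/
theorem demazure_product_exists_unique :
    (∀ α β : Equiv.Perm ℤ, ASP α → ASP β → ∃! γ : Equiv.Perm ℤ, ASP γ ∧ IsDem α β γ) ∧
    (∀ D : Equiv.Perm ℤ → Equiv.Perm ℤ → Equiv.Perm ℤ,
      (∀ α β, ASP α → ASP β → ASP (D α β) ∧ IsDem α β (D α β)) →
      (∀ α β γ, ASP α → ASP β → ASP γ → D (D α β) γ = D α (D β γ)) ∧
      (∀ α β, ASP α → ASP β → (D α β)⁻¹ = D β⁻¹ α⁻¹) ∧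
      (∀ α β, ASP α → ASP β → shiftASP (D α β) = shiftASP α + shiftASP β)) := by
  refine ⟨fun α β hα hβ => ?_, fun D hD => ⟨fun α β γ hα hβ hγ => ?_, fun α β hα hβ => ?_,
    fun α β hα hβ => ?_⟩⟩
  · obtain ⟨γ, hγ, h⟩ := exists_isDem hα hβ
    exact ⟨γ, ⟨hγ, h⟩, fun γ' h' => IsDem.unique h'.1 hγ h'.2 h⟩
  · obtain ⟨p1, h1⟩ := hD α β hα hβ
    obtain ⟨p2, h2⟩ := hD _ γ p1 hγ
    obtain ⟨p3, h3⟩ := hD β γ hβ hγ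
    obtain ⟨p4, h4⟩ := hD α _ hα p3
    exact IsDem.assoc p2 p4 h1 h2 h3 h4
  · obtain ⟨p1, h1⟩ := hD α β hα hβ
    obtain ⟨p2, h2⟩ := hD _ _ hβ.inv hα.inv
    exact IsDem.unique p1.inv p2 (h1.inv hα hβ p1) h2
  · obtain ⟨p1, h1⟩ := hD α β hα hβ
    exact h1.shift hα hβ p1
end

section
/- For all α, β ∈ ASP, the Demazure product α ⋆ β is simultaneously: (1) the maximum in Bruhat order of the set {α₁ ∘ β₁ : α₁, β₁ ∈ ASP, α₁ ≤ α, β₁ ≤ β}; (2) the maximum of {α ∘ β₁ : β₁ ∈ ASP, β₁ ≤_χ β}; and (3) the maximum of {α₁ ∘ β : α₁ ∈ ASP, α₁ ≤_χ α}. In particular all three maxima exist. -/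
namespace DemazureGreedy

open Equiv

/-! ### Finiteness and closure properties of almost-sign-preserving permutations -/

lemma perm_apply_inv (α : Perm ℤ) (n : ℤ) : α (α⁻¹ n) = n := α.apply_symm_apply n

lemma perm_inv_apply (α : Perm ℤ) (n : ℤ) : α⁻¹ (α n) = n := α.symm_apply_apply n

lemma asp_iff {α : Perm ℤ} :
    ASP α ↔ {n : ℤ | (n < 0 ∧ ¬ α n < 0) ∨ (α n < 0 ∧ ¬ n < 0)}.Finite := Iff.rfl

lemma ASP.inv {α : Perm ℤ} (h : ASP α) : ASP α⁻¹ := by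
  rw [asp_iff] at h ⊢
  refine (h.image α).subset ?_
  intro n hn
  refine ⟨α⁻¹ n, ?_, by simp⟩
  simp only [Set.mem_ofPred_eq, perm_apply_inv] at hn ⊢
  exact hn.symm

lemma ASP.mul {α β : Perm ℤ} (hα : ASP α) (hβ : ASP β) : ASP (α * β) := by
  rw [asp_iff] at hα hβ ⊢
  refine (hβ.union (hα.preimage (f := β) β.injective.injOn)).subset ?_
  intro n hn
  simp only [Set.mem_ofPred_eq, Set.mem_union, Set.mem_preimage, Perm.mul_apply] at hn ⊢
  tauto

lemma ASP.finite {α : Perm ℤ} (h : ASP α) (a b : ℤ) :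
    {n : ℤ | b ≤ n ∧ α n < a}.Finite := by
  rw [asp_iff] at h
  refine ((h.union (Set.finite_Ico b 0)).union
    ((Set.finite_Ico 0 a).preimage (f := α) α.injective.injOn)).subset ?_
  rintro n ⟨h1, h2⟩
  simp only [Set.mem_ofPred_eq, Set.mem_union, Set.mem_preimage, Set.mem_Ico]
  omega

/-- `s_α(a,b)` vanishes once `b` is large compared to `a`. -/
lemma ASP.exists_sF_eq_zero {α : Perm ℤ} (h : ASP α) (a : ℤ) : ∃ b, sF α a b = 0 := by
  obtain ⟨M, hM⟩ := (ASP.finite h a 0).bddAbove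
  refine ⟨max 0 (M + 1), ?_⟩
  have : {n : ℤ | max 0 (M + 1) ≤ n ∧ α n < a} = ∅ := by
    ext n
    simp only [Set.mem_ofPred_eq, Set.mem_empty_iff_false, iff_false]
    rintro ⟨h1, h2⟩
    have : n ≤ M := hM ⟨by omega, h2⟩
    omega
  rw [sF, this, Set.ncard_empty]

/-! ### Slipface functions -/

lemma sF_succ_left {α : Perm ℤ} (h : ASP α) (a b : ℤ) :
    sF α (a + 1) b = sF α a b + if b ≤ α⁻¹ a then 1 else 0 := by
  unfold sF
  split_ifs with hb
  · rw [← Set.ncard_insert_of_notMem (a := α⁻¹ a) (by simp) (ASP.finite h a b)]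
    congr 1
    ext n
    have key : n = α⁻¹ a ↔ α n = a := by rw [Perm.eq_inv_iff_eq]
    simp only [Set.mem_ofPred_eq, Set.mem_insert_iff, key]
    constructor
    · omega
    · rintro (h1 | h1)
      · have := key.2 h1
        omega
      · omega
  · congr 1
    ext n
    have key : n = α⁻¹ a ↔ α n = a := by rw [Perm.eq_inv_iff_eq]
    simp only [Set.mem_ofPred_eq]
    constructor
    · rintro ⟨h1, h2⟩
      have : α n ≠ a := fun h3 => by
        have := key.2 h3
        omega
      omega
    · omega

lemma sF_succ_right {α : Perm ℤ} (h : ASP α) (a b : ℤ) :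
    sF α a b = sF α a (b + 1) + if α b < a then 1 else 0 := by
  unfold sF
  split_ifs with hb
  · rw [← Set.ncard_insert_of_notMem (a := b) (by simp) (ASP.finite h a (b + 1))]
    congr 1
    ext n
    simp only [Set.mem_ofPred_eq, Set.mem_insert_iff]
    constructor
    · omega
    · rintro (rfl | h1)
      · exact ⟨le_rfl, hb⟩
      · omega
  · congr 1
    ext n
    simp only [Set.mem_ofPred_eq]
    constructor
    · rintro ⟨h1, h2⟩
      have : n ≠ b := by rintro rfl; exact hb h2
      omega
    · omega

/-- The shift measures the failure of `s_α` to be symmetric under inversion. -/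
lemma sF_eq {α : Perm ℤ} (h : ASP α) (a b : ℤ) :
    (sF α a b : ℤ) = shiftASP α + a - b + sF α⁻¹ b a := by
  have hl (a b : ℤ) : (sF α (a + 1) b : ℤ) - sF α⁻¹ b (a + 1) = sF α a b - sF α⁻¹ b a + 1 := by
    have h1 := sF_succ_left h a b
    have h2 := sF_succ_right (ASP.inv h) b a
    split_ifs at h1 h2 <;> omega
  have hr (a b : ℤ) : (sF α a (b + 1) : ℤ) - sF α⁻¹ (b + 1) a = sF α a b - sF α⁻¹ b a - 1 := by
    have h1 := sF_succ_right h a b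
    have h2 := sF_succ_left (ASP.inv h) b a
    rw [inv_inv] at h2
    split_ifs at h1 h2 <;> omega
  have h0 (a : ℤ) : (sF α a 0 : ℤ) - sF α⁻¹ 0 a = shiftASP α + a := by
    induction a using Int.induction_on with
    | zero => simp [shiftASP]
    | succ i ih => have := hl i 0; omega
    | pred i ih => have := hl (-i - 1) 0; rw [sub_add_cancel] at this; omega
  have h1 : (sF α a b : ℤ) - sF α⁻¹ b a = shiftASP α + a - b := by
    induction b using Int.induction_on with
    | zero => have := h0 a; omega
    | succ i ih => have := hr a i; omega
    | pred i ih => have := hr a (-i - 1); rw [sub_add_cancel] at this; omega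
  omega

/-- Submodularity of slipface functions. -/
lemma sF_submodular {α : Perm ℤ} (h : ASP α) {a a' l l' : ℤ} (ha : a ≤ a') (hl : l' ≤ l) :
    sF α a' l + sF α a l' ≤ sF α a' l' + sF α a l := by
  unfold sF
  rw [← Set.ncard_union_add_ncard_inter _ _ (ASP.finite h a' l) (ASP.finite h a l')]
  refine add_le_add (Set.ncard_le_ncard ?_ (ASP.finite h a' l'))
    (Set.ncard_le_ncard ?_ (ASP.finite h a l))
  · rintro n (⟨h1, h2⟩ | ⟨h1, h2⟩) <;> constructor <;> omega
  · rintro n ⟨⟨h1, h2⟩, h3, h4⟩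
    exact ⟨h1, h4⟩

lemma sF_eq_ncard_preimage (α β : Perm ℤ) (a l : ℤ) :
    sF α a l = {n : ℤ | l ≤ β n ∧ α (β n) < a}.ncard := by
  unfold sF
  rw [← Set.ncard_image_of_injective {n : ℤ | l ≤ β n ∧ α (β n) < a} β.injective]
  congr 1
  ext m
  constructor
  · intro hm
    exact ⟨β⁻¹ m, by simpa using hm, by simp⟩
  · rintro ⟨n, hn, rfl⟩
    exact hn

lemma sF_mul_le {α β : Perm ℤ} (hα : ASP α) (hβ : ASP β) (a b l : ℤ) :
    sF (α * β) a b ≤ sF α a l + sF β l b := by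
  have hfin : {n : ℤ | l ≤ β n ∧ α (β n) < a}.Finite :=
    (ASP.finite hα a l).preimage (f := β) β.injective.injOn
  rw [sF_eq_ncard_preimage α β, sF, sF]
  refine le_trans (Set.ncard_le_ncard ?_ (hfin.union (ASP.finite hβ l b)))
    (Set.ncard_union_le _ _)
  rintro n ⟨h1, h2⟩
  rcases le_or_gt l (β n) with h | h
  · exact Or.inl ⟨h, h2⟩
  · exact Or.inr ⟨h1, h⟩

/-! ### Shifts -/

lemma shiftASP_inv (α : Perm ℤ) : shiftASP α⁻¹ = -shiftASP α := by
  simp [shiftASP]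

lemma shiftASP_mul_le {α β : Perm ℤ} (hα : ASP α) (hβ : ASP β) :
    shiftASP (α * β) ≤ shiftASP α + shiftASP β := by
  obtain ⟨l, hl⟩ := ASP.exists_sF_eq_zero (ASP.inv hβ) 0
  obtain ⟨a, ha⟩ := ASP.exists_sF_eq_zero (ASP.inv hα) l
  have h1 := sF_eq (ASP.mul hα hβ) a 0
  have h2 := sF_eq hα a l
  have h3 := sF_eq hβ l 0
  have h4 := sF_mul_le hα hβ a 0 l
  omega

lemma shiftASP_mul {α β : Perm ℤ} (hα : ASP α) (hβ : ASP β) :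
    shiftASP (α * β) = shiftASP α + shiftASP β := by
  have h1 := shiftASP_mul_le hα hβ
  have h2 := shiftASP_mul_le (ASP.inv hβ) (ASP.inv hα)
  rw [← mul_inv_rev, shiftASP_inv, shiftASP_inv, shiftASP_inv] at h2
  omega

/-- Under equality of shifts, inversion preserves the Bruhat order. -/
lemma BruhatLEchi.inv {α β : Perm ℤ} (hα : ASP α) (hβ : ASP β) (h : BruhatLEchi α β) :
    BruhatLEchi α⁻¹ β⁻¹ := by
  refine ⟨fun a b => ?_, by rw [shiftASP_inv, shiftASP_inv, h.2]⟩
  have h1 := sF_eq hα b a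
  have h2 := sF_eq hβ b a
  have h3 := h.1 b a
  have h4 := h.2
  omega

/-! ### Demazure products -/

section

variable {α β γ : Perm ℤ}

lemma IsDem.le (hd : IsDem α β γ) (a b l : ℤ) : sF γ a b ≤ sF α a l + sF β l b :=
  (hd a b).2 ⟨l, rfl⟩

lemma IsDem.shift (hα : ASP α) (hβ : ASP β) (hγ : ASP γ) (hd : IsDem α β γ) :
    shiftASP γ = shiftASP α + shiftASP β := by
  apply le_antisymm
  · -- For `0 ≪ l ≪ a` both terms of the sum attain their lower bounds.
    obtain ⟨l, hl⟩ := ASP.exists_sF_eq_zero (ASP.inv hβ) 0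
    obtain ⟨a, ha⟩ := ASP.exists_sF_eq_zero (ASP.inv hα) l
    have h1 := sF_eq hγ a 0
    have h2 := sF_eq hα a l
    have h3 := sF_eq hβ l 0
    have h4 := IsDem.le hd a 0 l
    omega
  · obtain ⟨a, ha⟩ := ASP.exists_sF_eq_zero (ASP.inv hγ) 0
    obtain ⟨l, hl⟩ := (hd a 0).1
    have h1 := sF_eq hγ a 0
    have h2 := sF_eq hα a l
    have h3 := sF_eq hβ l 0
    omega

lemma IsDem.inv (hα : ASP α) (hβ : ASP β) (hγ : ASP γ) (hd : IsDem α β γ) :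
    IsDem β⁻¹ α⁻¹ γ⁻¹ := by
  have hs := IsDem.shift hα hβ hγ hd
  intro b a
  have h1 := sF_eq hγ a b
  constructor
  · obtain ⟨l, hl⟩ := (hd a b).1
    have h2 := sF_eq hα a l
    have h3 := sF_eq hβ l b
    exact ⟨l, by omega⟩
  · rintro x ⟨l, rfl⟩
    have h2 := sF_eq hα a l
    have h3 := sF_eq hβ l b
    have h4 := IsDem.le hd a b l
    omega

/-- Every inversion of `α⁻¹` is an inversion of `(α ⋆ β)⁻¹`. -/
lemma IsDem.inv_lt (hα : ASP α) (hγ : ASP γ) (hd : IsDem α β γ) {u v : ℤ} (huv : u < v)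
    (h : α⁻¹ v < α⁻¹ u) : γ⁻¹ v < γ⁻¹ u := by
  by_contra! hle
  have hne : γ⁻¹ u ≠ γ⁻¹ v := fun h => huv.ne (γ⁻¹.injective h)
  -- The row `b = γ⁻¹ v` separates `γ⁻¹ u` from `γ⁻¹ v`.
  set b := γ⁻¹ v with hb
  have hlt : γ⁻¹ u < b := lt_of_le_of_ne hle hne
  have hu : sF γ (u + 1) b = sF γ u b := by
    rw [sF_succ_left hγ, if_neg (by omega), add_zero]
  have hv : sF γ (v + 1) b = sF γ v b + 1 := by
    rw [sF_succ_left hγ, if_pos hb.le]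
  -- Any minimizer for `(u + 1, b)` exceeds `α⁻¹ u`.
  have hU (l : ℤ) (hl : sF γ (u + 1) b = sF α (u + 1) l + sF β l b) : α⁻¹ u < l := by
    have h1 := IsDem.le hd u b l
    have h2 := sF_succ_left hα u l
    split_ifs at h2 <;> omega
  -- Any minimizer for `(v, b)` is at most `α⁻¹ v`.
  have hV (l : ℤ) (hl : sF γ v b = sF α v l + sF β l b) : l ≤ α⁻¹ v := by
    have h1 := IsDem.le hd (v + 1) b l
    have h2 := sF_succ_left hα v l
    split_ifs at h2 <;> omega
  obtain ⟨l, hl⟩ := (hd (u + 1) b).1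
  obtain ⟨k, hk⟩ := (hd v b).1
  have h1 := hU l hl
  have h2 := hV k hk
  -- By submodularity the smaller minimizer `k` is also one for `(u + 1, b)`.
  have h3 := sF_submodular hα (show u + 1 ≤ v by omega) (show k ≤ l by omega)
  have h4 := IsDem.le hd v b l
  have h5 := IsDem.le hd (u + 1) b k
  have h6 := hU k (by omega)
  omega

/-- For a reduced product `α * δ` (`hred`), a nonzero value `s_δ(l,b)` is at most the difference
`s_{αδ}(a,b) - s_α(a,l)` for a suitable `a`. The reverse inequality holds for every `a`, by
`sF_mul_le`. -/
lemma exists_sF_add_le {α δ : Perm ℤ} (hα : ASP α) (hδ : ASP δ)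
    (hred : ∀ u v : ℤ, u < v → α⁻¹ v < α⁻¹ u → (α * δ)⁻¹ v < (α * δ)⁻¹ u) (l b : ℤ) :
    sF δ l b = 0 ∨ ∃ a, sF δ l b + sF α a l ≤ sF (α * δ) a b := by
  have hfin := ASP.finite hδ l b
  rcases Set.eq_empty_or_nonempty {n : ℤ | b ≤ n ∧ δ n < l} with h | h
  · left
    rw [sF, h, Set.ncard_empty]
  · right
    -- The smallest `a` exceeding `α (δ n)` for all `n` counted by `s_δ(l,b)`.
    obtain ⟨n₀, ⟨hn₀, hn₀'⟩, hmax⟩ := Set.exists_max_image _ (fun n => α (δ n)) hfin h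
    refine ⟨α (δ n₀) + 1, ?_⟩
    have hfin' : {n : ℤ | l ≤ δ n ∧ α (δ n) < α (δ n₀) + 1}.Finite :=
      (ASP.finite hα _ l).preimage (f := δ) δ.injective.injOn
    have hdisj : Disjoint {n : ℤ | b ≤ n ∧ δ n < l}
        {n : ℤ | l ≤ δ n ∧ α (δ n) < α (δ n₀) + 1} := by
      rw [Set.disjoint_left]
      rintro n ⟨_, h1⟩ ⟨h2, _⟩
      omega
    rw [sF_eq_ncard_preimage α δ, sF, sF, ← Set.ncard_union_eq hdisj hfin hfin']
    refine Set.ncard_le_ncard ?_ (ASP.finite (ASP.mul hα hδ) _ b)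
    rintro n (hn | ⟨h1, h2⟩)
    · exact ⟨hn.1, Int.lt_add_one_of_le (hmax n hn)⟩
    · refine ⟨?_, h2⟩
      have hne : α (δ n) ≠ α (δ n₀) := fun h => by
        have := α.injective h
        omega
      have := hred (α (δ n)) (α (δ n₀)) (by omega)
        (by simp only [perm_inv_apply]; omega)
      simp only [mul_inv_rev, Perm.mul_apply, perm_inv_apply] at this
      omega

/-- The greedy right factor: `α * (α⁻¹ * γ)` is a reduced product, so `exists_sF_add_le` bounds
`α⁻¹ * γ` by `β`. -/
lemma IsDem.inv_mul_le (hα : ASP α) (hβ : ASP β) (hγ : ASP γ) (hd : IsDem α β γ) :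
    BruhatLEchi (α⁻¹ * γ) β := by
  constructor
  · intro l b
    have h := exists_sF_add_le hα (ASP.mul (ASP.inv hα) hγ) (l := l) (b := b) <| by
      rw [mul_inv_cancel_left]
      exact fun u v => IsDem.inv_lt hα hγ hd
    rw [mul_inv_cancel_left] at h
    rcases h with h | ⟨a, ha⟩
    · omega
    · have := IsDem.le hd a b l
      omega
  · rw [shiftASP_mul (ASP.inv hα) hγ, shiftASP_inv, IsDem.shift hα hβ hγ hd]
    omega

end

end DemazureGreedy

open DemazureGreedy

/-- Theorem B (greedy characterization): `α ⋆ β` is simultaneously the Bruhat-maximum of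
`{α₁β₁ : α₁ ≤ α, β₁ ≤ β}`, of `{αβ₁ : β₁ ≤_χ β}`, and of `{α₁β : α₁ ≤_χ α}`. -/
theorem demazure_greedy (α β : Equiv.Perm ℤ) (hα : ASP α) (hβ : ASP β)
    (γ : Equiv.Perm ℤ) (hγ : ASP γ) (hdem : IsDem α β γ) :
    ((∃ α₁ β₁ : Equiv.Perm ℤ, ASP α₁ ∧ ASP β₁ ∧ BruhatLE α₁ α ∧ BruhatLE β₁ β ∧
        γ = α₁ * β₁) ∧
      (∀ α₁ β₁ : Equiv.Perm ℤ, ASP α₁ → ASP β₁ → BruhatLE α₁ α → BruhatLE β₁ β →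
        BruhatLE (α₁ * β₁) γ)) ∧
    ((∃ β₁ : Equiv.Perm ℤ, ASP β₁ ∧ BruhatLEchi β₁ β ∧ γ = α * β₁) ∧
      (∀ β₁ : Equiv.Perm ℤ, ASP β₁ → BruhatLEchi β₁ β → BruhatLE (α * β₁) γ)) ∧
    ((∃ α₁ : Equiv.Perm ℤ, ASP α₁ ∧ BruhatLEchi α₁ α ∧ γ = α₁ * β) ∧
      (∀ α₁ : Equiv.Perm ℤ, ASP α₁ → BruhatLEchi α₁ α → BruhatLE (α₁ * β) γ)) := by
  have hub (α₁ β₁ : Equiv.Perm ℤ) (h1 : ASP α₁) (h2 : ASP β₁) (h3 : BruhatLE α₁ α)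
      (h4 : BruhatLE β₁ β) : BruhatLE (α₁ * β₁) γ := by
    intro a b
    obtain ⟨l, hl⟩ := (hdem a b).1
    rw [hl]
    exact (sF_mul_le h1 h2 a b l).trans (add_le_add (h3 a l) (h4 l b))
  have hR : BruhatLEchi (α⁻¹ * γ) β := IsDem.inv_mul_le hα hβ hγ hdem
  have hRA : ASP (α⁻¹ * γ) := ASP.mul (ASP.inv hα) hγ
  have hLA : ASP (γ * β⁻¹) := ASP.mul hγ (ASP.inv hβ)
  -- The left factor is obtained from `γ⁻¹ = β⁻¹ ⋆ α⁻¹`.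
  have hL : BruhatLEchi (γ * β⁻¹) α := by
    have h := BruhatLEchi.inv (ASP.mul (ASP.inv (ASP.inv hβ)) (ASP.inv hγ)) (ASP.inv hα)
      (IsDem.inv_mul_le (ASP.inv hβ) (ASP.inv hα) (ASP.inv hγ) (IsDem.inv hα hβ hγ hdem))
    simpa only [mul_inv_rev, inv_inv] using h
  exact ⟨⟨⟨α, α⁻¹ * γ, hα, hRA, fun _ _ => le_rfl, hR.1, by rw [mul_inv_cancel_left]⟩, hub⟩,
    ⟨⟨α⁻¹ * γ, hRA, hR, by rw [mul_inv_cancel_left]⟩,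
      fun β₁ h1 h2 => hub α β₁ hα h1 (fun _ _ => le_rfl) h2.1⟩,
    ⟨⟨γ * β⁻¹, hLA, hL, by rw [inv_mul_cancel_right]⟩,
      fun α₁ h1 h2 => hub α₁ β h1 hβ h2.1 (fun _ _ => le_rfl)⟩⟩
end

section
/- Let α ∈ ASP and let S ⊆ ℤ be a set containing no two consecutive integers. Define S₁ = {n ∈ S : α(n) < α(n+1)} and S₂ = {n ∈ S : α(n) > α(n+1)}. Then α ⋆ σ_S = α ∘ σ_{S₁} and α ◁ σ_S = α ∘ σ_{S₂}. -/
/-- `σ` is the permutation `σ_S`: it exchanges `n` and `n+1` for every `n ∈ S`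
and fixes every other integer. -/
def IsSigmaS (S : Set ℤ) (σ : Equiv.Perm ℤ) : Prop :=
  (∀ n ∈ S, σ n = n + 1 ∧ σ (n + 1) = n) ∧
  (∀ m : ℤ, m ∉ S → m - 1 ∉ S → σ m = m)

/-- The sets counted by the slipface function of `α` are finite. This weakening of `ASP` is what
the argument uses; it rules out the junk value of `Set.ncard`. -/
def FinSF (α : Equiv.Perm ℤ) : Prop := ∀ a b : ℤ, {n : ℤ | b ≤ n ∧ α n < a}.Finite

theorem ASP.finSF {α : Equiv.Perm ℤ} (h : ASP α) : FinSF α := by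
  intro a b
  refine ((h.union (Set.finite_Ico b 0)).union
    ((Set.finite_Ico 0 a).preimage α.injective.injOn)).subset ?_
  rintro n ⟨h1, h2⟩
  simp only [Set.mem_union, Set.mem_ofPred_eq, Set.mem_Ico, Set.mem_preimage, Xor', Xor]
  omega

theorem sF_step {α : Equiv.Perm ℤ} (h : FinSF α) (a b : ℤ) :
    sF α a b = sF α a (b + 1) + if α b < a then 1 else 0 := by
  unfold sF
  split_ifs with hb
  · rw [← Set.ncard_insert_of_notMem (a := b) (by simp) (h a (b + 1))]
    congr 1
    ext n
    simp only [Set.mem_insert_iff, Set.mem_ofPred_eq]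
    constructor
    · rintro ⟨h1, h2⟩
      by_cases hn : n = b
      · exact Or.inl hn
      · exact Or.inr ⟨by omega, h2⟩
    · rintro (rfl | ⟨h1, h2⟩)
      · exact ⟨le_rfl, hb⟩
      · exact ⟨by omega, h2⟩
  · rw [add_zero]
    congr 1
    ext n
    simp only [Set.mem_ofPred_eq]
    refine ⟨fun ⟨h1, h2⟩ => ⟨?_, h2⟩, fun ⟨h1, h2⟩ => ⟨by omega, h2⟩⟩
    have : n ≠ b := by rintro rfl; exact hb h2
    omega

theorem eq_of_sF_eq {γ δ : Equiv.Perm ℤ} (hγ : FinSF γ) (hδ : FinSF δ)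
    (h : ∀ a b, sF γ a b = sF δ a b) : γ = δ := by
  have key : ∀ a b : ℤ, γ b < a ↔ δ b < a := by
    intro a b
    have h1 := sF_step hγ a b
    have h2 := sF_step hδ a b
    rw [h a b, h a (b + 1)] at h1
    split_ifs at h1 h2 <;> first | tauto | omega
  ext b
  have h1 := key (γ b + 1) b
  have h2 := key (δ b + 1) b
  omega

/-- As a function of its second argument, `s_α` is antitone and 1-Lipschitz. The truncation in
`Int.toNat` makes the case `ℓ ≤ b` the antitonicity. -/
theorem sF_lip {α : Equiv.Perm ℤ} (h : FinSF α) (a b ℓ : ℤ) :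
    sF α a b ≤ sF α a ℓ + (ℓ - b).toNat := by
  rcases le_total b ℓ with hb | hb
  · induction ℓ, hb using Int.leInduction with
    | base => simp
    | succ n hn ih =>
      have := sF_step h a n
      split_ifs at this <;> omega
  · induction b, hb using Int.leInduction with
    | base => simp
    | succ n hn ih =>
      have := sF_step h a n
      split_ifs at this <;> omega

theorem IsSigmaS.cases {S : Set ℤ} {σ : Equiv.Perm ℤ} (h : IsSigmaS S σ) (n : ℤ) :
    (n ∈ S ∧ σ n = n + 1) ∨ (n - 1 ∈ S ∧ σ n = n - 1) ∨ (n ∉ S ∧ n - 1 ∉ S ∧ σ n = n) := by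
  by_cases h1 : n ∈ S
  · exact Or.inl ⟨h1, (h.1 n h1).1⟩
  by_cases h2 : n - 1 ∈ S
  · have := (h.1 _ h2).2
    rw [sub_add_cancel] at this
    exact Or.inr (Or.inl ⟨h2, this⟩)
  · exact Or.inr (Or.inr ⟨h1, h2, h.2 n h1 h2⟩)

theorem IsSigmaS.apply_apply {S : Set ℤ} {σ : Equiv.Perm ℤ} (h : IsSigmaS S σ) (n : ℤ) :
    σ (σ n) = n := by
  rcases h.cases n with ⟨h1, h2⟩ | ⟨h1, h2⟩ | ⟨-, -, h2⟩
  · rw [h2, (h.1 n h1).2]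
  · rw [h2, (h.1 _ h1).1, sub_add_cancel]
  · rw [h2, h2]

theorem IsSigmaS.inv_eq {S : Set ℤ} {σ : Equiv.Perm ℤ} (h : IsSigmaS S σ) : σ⁻¹ = σ := by
  ext n
  rw [Equiv.Perm.inv_eq_iff_eq, h.apply_apply]

theorem IsSigmaS.finSF_mul {S : Set ℤ} {σ α : Equiv.Perm ℤ} (h : IsSigmaS S σ)
    (hα : FinSF α) : FinSF (α * σ) := by
  intro a b
  refine ((hα a (b - 1)).preimage σ.injective.injOn).subset ?_
  rintro n ⟨h1, h2⟩
  refine ⟨?_, h2⟩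
  rcases h.cases n with ⟨-, h3⟩ | ⟨-, h3⟩ | ⟨-, -, h3⟩ <;> omega

theorem IsSigmaS.finSF {S : Set ℤ} {σ : Equiv.Perm ℤ} (h : IsSigmaS S σ) : FinSF σ := by
  have h1 : FinSF 1 := fun a b => Set.finite_Ico b a
  simpa using h.finSF_mul h1

/-- If `b - 1 ∉ T`, then `σ_T` preserves the ray `[b, ∞)`. -/
theorem sF_mul_sigma_of_notMem {T : Set ℤ} {σ : Equiv.Perm ℤ} (h : IsSigmaS T σ)
    (α : Equiv.Perm ℤ) (a b : ℤ) (hb : b - 1 ∉ T) : sF (α * σ) a b = sF α a b := by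
  have hle : ∀ n, b ≤ n → b ≤ σ n := by
    intro n hn
    rcases h.cases n with ⟨-, h2⟩ | ⟨h1, h2⟩ | ⟨-, -, h2⟩
    · omega
    · have : n ≠ b := by rintro rfl; exact hb h1
      omega
    · omega
  unfold sF
  rw [← Set.ncard_image_of_injective _ σ.injective]
  congr 1
  ext m
  constructor
  · rintro ⟨n, ⟨h1, h2⟩, rfl⟩
    exact ⟨hle n h1, h2⟩
  · rintro ⟨h1, h2⟩
    refine ⟨σ m, ⟨hle m h1, ?_⟩, h.apply_apply m⟩
    rwa [Equiv.Perm.mul_apply, h.apply_apply]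

open Classical in
theorem sF_mul_sigma {T : Set ℤ} (hT : ∀ n ∈ T, n + 1 ∉ T) {σ α : Equiv.Perm ℤ}
    (h : IsSigmaS T σ) (hα : FinSF α) (a b : ℤ) :
    sF (α * σ) a b =
      sF α a (b + 1) + if (if b - 1 ∈ T then α (b - 1) else α b) < a then 1 else 0 := by
  by_cases hb : b - 1 ∈ T
  · have hb' : b ∉ T := by simpa using hT _ hb
    have hσ : σ b = b - 1 := by simpa using (h.1 _ hb).2
    rw [sF_step (h.finSF_mul hα), sF_mul_sigma_of_notMem h α a (b + 1) (by simpa using hb'),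
      Equiv.Perm.mul_apply, hσ, if_pos hb]
  · rw [sF_mul_sigma_of_notMem h α a b hb, sF_step hα, if_neg hb]

open Classical in
theorem sF_sigma {S : Set ℤ} (hS : ∀ n ∈ S, n + 1 ∉ S) {σ : Equiv.Perm ℤ}
    (h : IsSigmaS S σ) (ℓ b : ℤ) :
    sF σ ℓ b = if ℓ = b ∧ b - 1 ∈ S then 1 else (ℓ - b).toNat := by
  rcases le_total (ℓ + 1) b with hb | hb
  · -- `σ n ≥ n - 1 ≥ ℓ` for all `n ≥ b`, so nothing is counted.
    have h0 : {n : ℤ | b ≤ n ∧ σ n < ℓ} = ∅ := by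
      ext n
      simp only [Set.mem_ofPred_eq, Set.mem_empty_iff_false, iff_false]
      rcases h.cases n with ⟨-, h3⟩ | ⟨-, h3⟩ | ⟨-, -, h3⟩ <;> omega
    rw [if_neg (by omega), sF, h0, Set.ncard_empty]
    omega
  · induction b, hb using Int.leInductionDown with
    | base =>
      have h0 : {n : ℤ | ℓ + 1 ≤ n ∧ σ n < ℓ} = ∅ := by
        ext n
        simp only [Set.mem_ofPred_eq, Set.mem_empty_iff_false, iff_false]
        rcases h.cases n with ⟨-, h3⟩ | ⟨-, h3⟩ | ⟨-, -, h3⟩ <;> omega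
      rw [if_neg (by omega), sF, h0, Set.ncard_empty]
      omega
    | pred n hn ih =>
      have hs := sF_step h.finSF ℓ (n - 1)
      rw [sub_add_cancel, ih] at hs
      rw [hs]
      have hc := h.cases (n - 1)
      have hS' := hS (n - 1 - 1)
      rw [sub_add_cancel] at hS'
      by_cases h1 : n - 1 ∈ S <;> by_cases h2 : n - 1 - 1 ∈ S <;>
        simp only [h1, h2, true_and, false_and, and_true, and_false, not_true, not_false_eq_true,
          or_false, false_or, if_false, forall_true_left] at hc hS' ⊢ <;>
        split_ifs <;> omega

/-- Theorem: for `S` with no two consecutive integers, with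
`S₁ = {n ∈ S : α(n) < α(n+1)}` and `S₂ = {n ∈ S : α(n) > α(n+1)}`, one has
`α ⋆ σ_S = α ∘ σ_{S₁}` and `α ◁ σ_S = α ∘ σ_{S₂}`. -/
theorem star_triL_sigmaS (α : Equiv.Perm ℤ) (hα : ASP α)
    (S : Set ℤ) (hS : ∀ n ∈ S, n + 1 ∉ S)
    (σS σ₁ σ₂ : Equiv.Perm ℤ)
    (hσS : IsSigmaS S σS)
    (hσ₁ : IsSigmaS {n ∈ S | α n < α (n + 1)} σ₁)
    (hσ₂ : IsSigmaS {n ∈ S | α (n + 1) < α n} σ₂) :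
    (∀ γ : Equiv.Perm ℤ, ASP γ → IsDem α σS γ → γ = α * σ₁) ∧
    (∀ γ : Equiv.Perm ℤ, ASP γ → IsTriL α σS γ → γ = α * σ₂) := by
  have fα := hα.finSF
  constructor
  · intro γ hγ hD
    refine eq_of_sF_eq hγ.finSF (hσ₁.finSF_mul fα) fun a b => (hD a b).unique ?_
    have hm := sF_mul_sigma (fun n hn hn' => hS n hn.1 hn'.1) hσ₁ fα a b
    have hs := sF_step fα a b
    have hs' := sF_step fα a (b - 1)
    have he : α (b - 1 + 1) = α b := by rw [sub_add_cancel]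
    have hne : α (b - 1) ≠ α b := fun h => by have := α.injective h; omega
    simp only [Set.mem_ofPred_eq, sub_add_cancel] at hm hs'
    by_cases hb : b - 1 ∈ S
    · simp only [hb, true_and] at hm
      constructor
      · -- The minimum is at `ℓ = b - 1` if both `α (b - 1)` and `α b` are at least `a`,
        -- and at `ℓ = b + 1` otherwise.
        by_cases hx : a ≤ α (b - 1) ∧ a ≤ α b
        · refine ⟨b - 1, ?_⟩
          rw [sF_sigma hS hσS, if_neg (by omega)]
          split_ifs at hm hs hs' <;> omega
        · refine ⟨b + 1, ?_⟩
          rw [sF_sigma hS hσS, if_neg (by omega)]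
          split_ifs at hm hs hs' <;> omega
      · rintro _ ⟨ℓ, rfl⟩
        rw [sF_sigma hS hσS]
        simp only [hb, and_true]
        have l1 := sF_lip fα a (b - 1) ℓ
        have l2 := sF_lip fα a (b + 1) ℓ
        by_cases hℓ : ℓ = b
        · subst hℓ
          rw [if_pos rfl]
          split_ifs at hm hs hs' <;> omega
        · rw [if_neg hℓ]
          split_ifs at hm hs hs' <;> omega
    · simp only [hb, false_and, if_false] at hm
      rw [← hs] at hm
      rw [hm]
      constructor
      · exact ⟨b, by simp [sF_sigma hS hσS, hb]⟩
      · rintro _ ⟨ℓ, rfl⟩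
        rw [sF_sigma hS hσS, if_neg (by tauto)]
        exact sF_lip fα a b ℓ
  · intro γ hγ hD
    refine eq_of_sF_eq hγ.finSF (hσ₂.finSF_mul fα) fun a b =>
      Int.ofNat_inj.mp ((hD a b).unique ?_)
    rw [hσS.inv_eq]
    have hm := sF_mul_sigma (fun n hn hn' => hS n hn.1 hn'.1) hσ₂ fα a b
    have hs := sF_step fα a b
    have hs' := sF_step fα a (b - 1)
    have he : α (b - 1 + 1) = α b := by rw [sub_add_cancel]
    have hne : α (b - 1) ≠ α b := fun h => by have := α.injective h; omega
    simp only [Set.mem_ofPred_eq, sub_add_cancel] at hm hs'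
    by_cases hb : b - 1 ∈ S
    · simp only [hb, true_and] at hm
      constructor
      · -- The maximum is at `ℓ = b - 1` if both `α (b - 1)` and `α b` are less than `a`,
        -- and at `ℓ = b + 1` otherwise.
        by_cases hx : α (b - 1) < a ∧ α b < a
        · refine ⟨b - 1, ?_⟩
          rw [sF_sigma hS hσS, if_neg (by omega)]
          split_ifs at hm hs hs' <;> omega
        · refine ⟨b + 1, ?_⟩
          rw [sF_sigma hS hσS, if_neg (by omega)]
          split_ifs at hm hs hs' <;> omega
      · rintro _ ⟨ℓ, rfl⟩
        rw [sF_sigma hS hσS]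
        have l1 := sF_lip fα a ℓ (b - 1)
        have l2 := sF_lip fα a ℓ (b + 1)
        by_cases hℓ : ℓ = b
        · subst hℓ
          rw [if_pos ⟨rfl, hb⟩]
          split_ifs at hm hs hs' <;> omega
        · rw [if_neg (by omega)]
          split_ifs at hm hs hs' <;> omega
    · simp only [hb, false_and, if_false] at hm
      rw [← hs] at hm
      rw [hm]
      constructor
      · exact ⟨b, by simp [sF_sigma hS hσS, hb]⟩
      · rintro _ ⟨ℓ, rfl⟩
        have hbℓ : ¬(b = ℓ ∧ ℓ - 1 ∈ S) := by
          rintro ⟨rfl, h⟩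
          exact hb h
        rw [sF_sigma hS hσS, if_neg hbℓ]
        have := sF_lip fα a ℓ b
        omega
end
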